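/- arXiv:2604.02063 — 2 statements merged into one kernel-verified Lean document; each statement's English description precedes it below -/
import Mathlib

section
/- Let R be a finite nontrivial commutative local principal ideal ring. Then there is no cross-commuting nonabelian square in the group of affine permutations of R: there do not exist affine permutations F₀, F₁, G₀, G₁ of R such that Fᵢ commutes with Gⱼ for all i, j ∈ {0,1} while F₀ does not commute with F₁ and G₀ does not commute with G₁. -/
/-- Two self-maps of a type commute under composition. -/
def MapsCommute {α : Type*} (f g : α → α) : Prop :=
  f ∘ g = g ∘ f

/-- `f : R → R` is an affine permutation: `x ↦ a·x + b` with `a` a unit of `R`. -/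
def IsAffinePerm {R : Type*} [CommRing R] (f : R → R) : Prop :=
  ∃ a : Rˣ, ∃ b : R, ∀ x, f x = (a : R) * x + b

/-- A cross-commuting nonabelian square exists in the affine permutation group of `R`:
affine permutations `F₀, F₁, G₀, G₁` with all cross pairs `Fᵢ, Gⱼ` commuting while
`F₀, F₁` do not commute and `G₀, G₁` do not commute. -/
def HasCrossCommutingNonabelianSquare (R : Type*) [CommRing R] : Prop :=
  ∃ F₀ F₁ G₀ G₁ : R → R,
    IsAffinePerm F₀ ∧ IsAffinePerm F₁ ∧ IsAffinePerm G₀ ∧ IsAffinePerm G₁ ∧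
    MapsCommute F₀ G₀ ∧ MapsCommute F₀ G₁ ∧ MapsCommute F₁ G₀ ∧ MapsCommute F₁ G₁ ∧
    ¬ MapsCommute F₀ F₁ ∧ ¬ MapsCommute G₀ G₁

/-!
The affine maps `x ↦ a * x + b` and `x ↦ c * x + d` commute exactly when the vectors `(a - 1, b)`
and `(c - 1, d)` of `R²` have determinant zero. When divisibility is total in `R`, all the vectors
involved can be divided by a common factor `g` so that one of the quotients, `e`, becomes
unimodular. Complete `e` to a basis `e, e'` of `R²` with determinant one. Each vector `g • x` with
`det (g • e, g • x) = 0` has its `e'`-coordinate killed by `g`, while its `e`-coordinate is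
divisible by `g`; so any two such vectors have determinant zero.
-/

open Matrix

section Divisibility

theorem preValuationRing_of_isLocalRing_of_isBezout (R : Type*) [CommRing R] [IsLocalRing R]
    [IsBezout R] : PreValuationRing R := by
  refine PreValuationRing.iff_dvd_total.mpr ⟨fun a b => ?_⟩
  obtain ⟨a', ha⟩ := IsBezout.gcd_dvd_left a b
  obtain ⟨b', hb⟩ := IsBezout.gcd_dvd_right a b
  obtain ⟨x, y, hxy⟩ := IsBezout.gcd_eq_sum a b
  generalize IsBezout.gcd a b = g at ha hb hxy
  subst ha hb
  have hg : g * (1 - (x * a' + y * b')) = 0 := by linear_combination -hxy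
  -- `g` may be a zero divisor, so locality has to stand in for cancelling it.
  rcases IsLocalRing.isUnit_or_isUnit_one_sub_self (x * a' + y * b') with h | h
  · rcases IsLocalRing.isUnit_or_isUnit_of_isUnit_add h with h | h
    · exact .inl (mul_dvd_mul_left g (isUnit_of_mul_isUnit_right h).dvd)
    · exact .inr (mul_dvd_mul_left g (isUnit_of_mul_isUnit_right h).dvd)
  · have : g = 0 := h.mul_left_eq_zero.mp hg
    simp [this]

theorem exists_forall_dvd {R ι : Type*} [CommMonoid R] [PreValuationRing R] [Finite ι]
    [Nonempty ι] (f : ι → R) : ∃ i, ∀ j, f i ∣ f j := by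
  obtain ⟨i, -, hi⟩ := Set.finite_univ.exists_minimalFor (fun j => Associates.mk (f j))
    Set.univ Set.univ_nonempty
  simp only [Associates.mk_le_mk_iff_dvd] at hi
  exact ⟨i, fun j => (ValuationRing.dvd_total (f i) (f j)).elim id (hi (Set.mem_univ j))⟩

theorem exists_eq_smul_and_apply_eq_one {R ι : Type*} [CommMonoid R] [PreValuationRing R]
    [Finite ι] [Nonempty ι] (f : ι → R) : ∃ (g : R) (w : ι → R), f = g • w ∧ ∃ i, w i = 1 := by
  classical
  obtain ⟨i, hi⟩ := exists_forall_dvd f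
  choose q hq using hi
  refine ⟨f i, Function.update q i 1, ?_, i, Function.update_self ..⟩
  ext j
  rcases eq_or_ne j i with rfl | hji
  · simp
  · simpa [hji] using hq j

end Divisibility

section Determinants

variable {R : Type*} [CommRing R]

theorem det_smul_smul_eq_zero_of_isCoprime {g : R} {e x y : Fin 2 → R}
    (he : IsCoprime (e 0) (e 1)) (hx : (of ![g • e, g • x]).det = 0)
    (hy : (of ![g • e, g • y]).det = 0) : (of ![g • x, g • y]).det = 0 := by
  obtain ⟨a, b, hab⟩ := he
  simp only [det_fin_two, of_apply, cons_val_zero, cons_val_one, Pi.smul_apply,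
    smul_eq_mul] at hx hy ⊢
  -- In the basis `e, (-b, a)` the `e`-coordinate of `z` is `a * z 0 + b * z 1`.
  linear_combination (a * x 0 + b * x 1) * hy - (a * y 0 + b * y 1) * hx -
    g ^ 2 * (x 0 * y 1 - x 1 * y 0) * hab

theorem exists_eq_smul_and_isCoprime [PreValuationRing R] {ι : Type*} [Finite ι] [Nonempty ι]
    (u : ι → Fin 2 → R) :
    ∃ (g : R) (w : ι → Fin 2 → R), u = g • w ∧ ∃ i, IsCoprime (w i 0) (w i 1) := by
  obtain ⟨g, w, huw, ⟨i, k⟩, hik⟩ := exists_eq_smul_and_apply_eq_one (Function.uncurry u)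
  refine ⟨g, Function.curry w, ?_, i, ?_⟩
  · ext j l
    exact congrFun huw (j, l)
  · simp only [Function.curry_apply]
    match k, hik with
    | 0, h => exact h ▸ isCoprime_one_left
    | 1, h => exact h ▸ isCoprime_one_right

theorem forall_det_eq_zero_or_of_forall_det_eq_zero [PreValuationRing R] {ι κ : Type*}
    [Finite ι] [Finite κ] {u : ι → Fin 2 → R} {v : κ → Fin 2 → R}
    (huv : ∀ i j, (of ![u i, v j]).det = 0) :
    (∀ i i', (of ![u i, u i']).det = 0) ∨ ∀ j j', (of ![v j, v j']).det = 0 := by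
  rcases isEmpty_or_nonempty ι with hι | hι
  · exact .inl isEmptyElim
  have hvu (j : κ) (i : ι) : (of ![v j, u i]).det = 0 := by
    have swap : (of ![v j, u i]).det = -(of ![u i, v j]).det := by
      simp only [det_fin_two, of_apply, cons_val_zero, cons_val_one]
      ring
    rw [swap, huv, neg_zero]
  obtain ⟨g, w, hw, m, hm⟩ := exists_eq_smul_and_isCoprime (Sum.elim u v)
  obtain rfl : u = fun i => g • w (.inl i) := funext fun i => congrFun hw (.inl i)
  obtain rfl : v = fun j => g • w (.inr j) := funext fun j => congrFun hw (.inr j)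
  rcases m with i | j
  · exact .inr fun j j' => det_smul_smul_eq_zero_of_isCoprime hm (huv i j) (huv i j')
  · exact .inl fun i i' => det_smul_smul_eq_zero_of_isCoprime hm (hvu j i) (hvu j i')

end Determinants

theorem mapsCommute_iff_det_eq_zero {R : Type*} [CommRing R] {f g : R → R} {a b c d : R}
    (hf : ∀ x, f x = a * x + b) (hg : ∀ x, g x = c * x + d) :
    MapsCommute f g ↔ !![a - 1, b; c - 1, d].det = 0 := by
  have comp_sub (x : R) : f (g x) - g (f x) = !![a - 1, b; c - 1, d].det := by
    rw [hf, hg, hf, hg, det_fin_two_of]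
    ring
  simp only [MapsCommute, funext_iff, Function.comp_apply, ← sub_eq_zero (b := g (f _)), comp_sub,
    forall_const]

theorem no_cross_commuting_nonabelian_square_local_general {R : Type*} [CommRing R]
    [PreValuationRing R] : ¬ HasCrossCommutingNonabelianSquare R := by
  rintro ⟨F₀, F₁, G₀, G₁, ⟨a₀, b₀, hF₀⟩, ⟨a₁, b₁, hF₁⟩, ⟨c₀, d₀, hG₀⟩, ⟨c₁, d₁, hG₁⟩,
    h₀₀, h₀₁, h₁₀, h₁₁, hF, hG⟩
  rw [mapsCommute_iff_det_eq_zero hF₀ hG₀] at h₀₀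
  rw [mapsCommute_iff_det_eq_zero hF₀ hG₁] at h₀₁
  rw [mapsCommute_iff_det_eq_zero hF₁ hG₀] at h₁₀
  rw [mapsCommute_iff_det_eq_zero hF₁ hG₁] at h₁₁
  rw [mapsCommute_iff_det_eq_zero hF₀ hF₁] at hF
  rw [mapsCommute_iff_det_eq_zero hG₀ hG₁] at hG
  let u : Fin 2 → Fin 2 → R := ![![a₀ - 1, b₀], ![a₁ - 1, b₁]]
  let v : Fin 2 → Fin 2 → R := ![![c₀ - 1, d₀], ![c₁ - 1, d₁]]
  have huv : ∀ i j, (of ![u i, v j]).det = 0 :=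
    Fin.forall_fin_two.mpr ⟨Fin.forall_fin_two.mpr ⟨h₀₀, h₀₁⟩, Fin.forall_fin_two.mpr ⟨h₁₀, h₁₁⟩⟩
  rcases forall_det_eq_zero_or_of_forall_det_eq_zero huv with h | h
  · exact hF (h 0 1)
  · exact hG (h 0 1)

/-- **No cross-commuting nonabelian square over a finite commutative local principal
ideal ring.** -/
theorem no_cross_commuting_nonabelian_square_local {R : Type*} [CommRing R] [Finite R]
    [Nontrivial R] [IsLocalRing R] [IsPrincipalIdealRing R] :
    ¬ HasCrossCommutingNonabelianSquare R := by
  have := preValuationRing_of_isLocalRing_of_isBezout R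
  exact no_cross_commuting_nonabelian_square_local_general
end

section
/- Let n ≥ 2 be an integer. Then the group of affine permutations of the ring ℤ/nℤ contains a cross-commuting nonabelian square if and only if n is neither a prime power nor twice an odd prime power (i.e., n is not of the form p^e for a prime p and e ≥ 1, and n is not of the form 2·q^e for an odd prime q and e ≥ 1). -/
/-!
The maps `x ↦ a * x + b` and `x ↦ c * x + d` commute iff `(a - 1) * d = (c - 1) * b`. Hence, if
`a - 1` divides both `c - 1` and `c' - 1`, two maps with linear parts `c` and `c'` that both commute
with the same map of linear part `a` commute with each other. So a ring in which the elements
`u - 1`, for `u` a unit, are totally preordered by divisibility has no square. This covers `ℤ/p^e`,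
and `ℤ/(2 q^e) ≃ ℤ/2 × ℤ/q^e` because the only unit of `ℤ/2` is `1`. For every other `n ≥ 2` the
Chinese remainder theorem splits `ℤ/n` into two rings in which `-1 ≠ 1`, so each has noncommuting
affine permutations; letting one pair act on each factor gives a square.
-/

section Commutation

variable {α β : Type*}

theorem MapsCommute.symm {f g : α → α} (h : MapsCommute f g) : MapsCommute g f :=
  Eq.symm h

theorem mapsCommute_conj_iff (e : α ≃ β) {f g : α → α} :
    MapsCommute (e.conj f) (e.conj g) ↔ MapsCommute f g := by
  rw [MapsCommute, ← e.conj_comp, ← e.conj_comp, e.conj.injective.eq_iff, MapsCommute]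

theorem mapsCommute_prodMap_iff [Nonempty α] [Nonempty β] {f f' : α → α} {g g' : β → β} :
    MapsCommute (Prod.map f g) (Prod.map f' g') ↔ MapsCommute f f' ∧ MapsCommute g g' := by
  refine ⟨fun h ↦ ⟨?_, ?_⟩, fun ⟨h, h'⟩ ↦ ?_⟩
  · exact funext fun x ↦ congrArg Prod.fst (congrFun h (x, Classical.arbitrary β))
  · exact funext fun y ↦ congrArg Prod.snd (congrFun h (Classical.arbitrary α, y))
  · rw [MapsCommute, Prod.map_comp_map, Prod.map_comp_map, h, h']

variable {R : Type*} [CommRing R] {a b c d c' d' : R}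

theorem mapsCommute_affine_iff :
    MapsCommute (fun x ↦ a * x + b) (fun x ↦ c * x + d) ↔ (a - 1) * d = (c - 1) * b := by
  constructor
  · intro h
    have h₀ := congrFun h 0
    simp only [Function.comp_apply] at h₀
    linear_combination h₀
  · intro h
    funext x
    simp only [Function.comp_apply]
    linear_combination h

theorem MapsCommute.of_sub_one_dvd (h : MapsCommute (fun x ↦ a * x + b) (fun x ↦ c * x + d))
    (h' : MapsCommute (fun x ↦ a * x + b) (fun x ↦ c' * x + d')) (hc : a - 1 ∣ c - 1)
    (hc' : a - 1 ∣ c' - 1) : MapsCommute (fun x ↦ c * x + d) (fun x ↦ c' * x + d') := by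
  rw [mapsCommute_affine_iff] at h h' ⊢
  obtain ⟨s, hs⟩ := hc
  obtain ⟨t, ht⟩ := hc'
  calc (c - 1) * d' = s * ((a - 1) * d') := by rw [hs]; ring
    _ = t * ((c - 1) * b) := by rw [h', ht, hs]; ring
    _ = (c' - 1) * d := by rw [← h, ht]; ring

end Commutation

section AffinePerm

variable {R S : Type*} [CommRing R] [CommRing S]

theorem isAffinePerm_iff {f : R → R} :
    IsAffinePerm f ↔ ∃ (a : Rˣ) (b : R), f = fun x ↦ a * x + b := by
  simp only [IsAffinePerm, funext_iff]

theorem isAffinePerm_id : IsAffinePerm (id : R → R) :=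
  ⟨1, 0, by simp⟩

theorem IsAffinePerm.prodMap {f : R → R} {g : S → S} (hf : IsAffinePerm f) (hg : IsAffinePerm g) :
    IsAffinePerm (Prod.map f g) := by
  obtain ⟨a, b, hf⟩ := hf
  obtain ⟨c, d, hg⟩ := hg
  exact ⟨MulEquiv.prodUnits.symm (a, c), (b, d), fun x ↦ Prod.ext (hf x.1) (hg x.2)⟩

theorem IsAffinePerm.conj {f : R → R} (hf : IsAffinePerm f) (φ : R ≃+* S) :
    IsAffinePerm (φ.toEquiv.conj f) := by
  obtain ⟨a, b, hf⟩ := hf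
  exact ⟨Units.mapEquiv φ.toMulEquiv a, φ b, fun x ↦ by simp [Equiv.conj_apply, hf]⟩

theorem exists_isAffinePerm_not_mapsCommute (R : Type*) [CommRing R] [Nontrivial Rˣ] :
    ∃ f g : R → R, IsAffinePerm f ∧ IsAffinePerm g ∧ ¬ MapsCommute f g := by
  obtain ⟨u, hu⟩ := exists_ne (1 : Rˣ)
  refine ⟨fun x ↦ u * x + 0, fun x ↦ (1 : Rˣ) * x + 1, ⟨u, 0, fun _ ↦ rfl⟩, ⟨1, 1, fun _ ↦ rfl⟩, ?_⟩
  rw [mapsCommute_affine_iff]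
  simpa [sub_eq_zero] using hu

end AffinePerm

section Square

variable {R S : Type*} [CommRing R] [CommRing S]

theorem HasCrossCommutingNonabelianSquare.of_ringEquiv (φ : R ≃+* S)
    (h : HasCrossCommutingNonabelianSquare R) : HasCrossCommutingNonabelianSquare S := by
  obtain ⟨F₀, F₁, G₀, G₁, hF₀, hF₁, hG₀, hG₁, h⟩ := h
  refine ⟨_, _, _, _, hF₀.conj φ, hF₁.conj φ, hG₀.conj φ, hG₁.conj φ, ?_⟩
  simpa only [mapsCommute_conj_iff] using h

theorem hasCrossCommutingNonabelianSquare_prod [Nontrivial Rˣ] [Nontrivial Sˣ] :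
    HasCrossCommutingNonabelianSquare (R × S) := by
  obtain ⟨f₀, f₁, hf₀, hf₁, hf⟩ := exists_isAffinePerm_not_mapsCommute R
  obtain ⟨g₀, g₁, hg₀, hg₁, hg⟩ := exists_isAffinePerm_not_mapsCommute S
  refine ⟨Prod.map f₀ id, Prod.map f₁ id, Prod.map id g₀, Prod.map id g₁,
    hf₀.prodMap isAffinePerm_id, hf₁.prodMap isAffinePerm_id,
    isAffinePerm_id.prodMap hg₀, isAffinePerm_id.prodMap hg₁, ?_⟩
  simp only [mapsCommute_prodMap_iff]
  exact ⟨⟨rfl, rfl⟩, ⟨rfl, rfl⟩, ⟨rfl, rfl⟩, ⟨rfl, rfl⟩, fun h ↦ hf h.1, fun h ↦ hg h.2⟩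

theorem not_hasCrossCommutingNonabelianSquare_of_dvd_total
    (total : ∀ u v : Rˣ, (u - 1 : R) ∣ v - 1 ∨ (v - 1 : R) ∣ u - 1) :
    ¬ HasCrossCommutingNonabelianSquare R := by
  simp only [HasCrossCommutingNonabelianSquare, isAffinePerm_iff]
  rintro ⟨_, _, _, _, ⟨a₀, b₀, rfl⟩, ⟨a₁, b₁, rfl⟩, ⟨c₀, d₀, rfl⟩, ⟨c₁, d₁, rfl⟩,
    h₀₀, h₀₁, h₁₀, h₁₁, hF, hG⟩
  wlog ha : (a₀ - 1 : R) ∣ a₁ - 1 generalizing a₀ a₁ b₀ b₁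
  · exact this a₁ b₁ a₀ b₀ h₁₀ h₁₁ h₀₀ h₀₁ (fun h ↦ hF h.symm) ((total a₀ a₁).resolve_left ha)
  wlog hc : (c₀ - 1 : R) ∣ c₁ - 1 generalizing c₀ c₁ d₀ d₁
  · exact this c₁ d₁ c₀ d₀ (fun h ↦ hG h.symm) h₀₁ h₀₀ h₁₁ h₁₀ ((total c₀ c₁).resolve_left hc)
  rcases total a₀ c₀ with hac | hca
  · exact hG (h₀₀.of_sub_one_dvd h₀₁ hac (hac.trans hc))
  · exact hF (h₀₀.symm.of_sub_one_dvd h₁₀.symm hca (hca.trans ha))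

theorem not_hasCrossCommutingNonabelianSquare_of_preValuationRing [PreValuationRing R] :
    ¬ HasCrossCommutingNonabelianSquare R :=
  not_hasCrossCommutingNonabelianSquare_of_dvd_total fun _ _ ↦ ValuationRing.dvd_total _ _

theorem not_hasCrossCommutingNonabelianSquare_prod_of_subsingleton_units [Subsingleton Rˣ]
    [PreValuationRing S] : ¬ HasCrossCommutingNonabelianSquare (R × S) := by
  refine not_hasCrossCommutingNonabelianSquare_of_dvd_total fun u v ↦ ?_
  have fst_eq_one (w : (R × S)ˣ) : (w : R × S).1 = 1 :=
    congrArg Units.val (Subsingleton.elim (Units.map (RingHom.fst R S : R × S →* R) w) 1)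
  simp only [prod_dvd_iff, Prod.fst_sub, Prod.snd_sub, fst_eq_one, Prod.fst_one, sub_self, dvd_rfl,
    true_and]
  exact ValuationRing.dvd_total _ _

end Square

section ZMod

theorem preValuationRing_zmod_prime_pow {p : ℕ} (hp : p.Prime) (e : ℕ) :
    PreValuationRing (ZMod (p ^ e)) :=
  have : Fact p.Prime := ⟨hp⟩
  Function.Surjective.preValuationRing (R := ℤ_[p]) (PadicInt.toZModPow (p := p) e)
    (ZMod.ringHom_surjective _)

theorem nontrivial_units_zmod {n : ℕ} (hn : 2 < n) : Nontrivial (ZMod n)ˣ :=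
  have : Fact (2 < n) := ⟨hn⟩
  ⟨-1, 1, fun h ↦ ZMod.neg_one_ne_one (by simpa using congrArg Units.val h)⟩

theorem exists_coprime_mul_of_not_prime_pow_of_not_two_mul_prime_pow {n : ℕ} (hn : 2 ≤ n)
    (hpow : ¬ ∃ p e : ℕ, p.Prime ∧ 1 ≤ e ∧ n = p ^ e)
    (htwo : ¬ ∃ q e : ℕ, q.Prime ∧ Odd q ∧ 1 ≤ e ∧ n = 2 * q ^ e) :
    ∃ u v : ℕ, 2 < u ∧ 2 < v ∧ u.Coprime v ∧ n = u * v := by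
  obtain ⟨k, rfl⟩ | ⟨p, hp, hpn, hodd⟩ := Nat.eq_two_pow_or_exists_odd_prime_and_dvd n
  · have hk : k ≠ 0 := by
      rintro rfl
      exact absurd hn (by decide)
    exact absurd ⟨2, k, Nat.prime_two, Nat.one_le_iff_ne_zero.2 hk, rfl⟩ hpow
  obtain ⟨e, m, hpm, rfl⟩ := Nat.exists_eq_pow_mul_and_not_dvd (by lia : n ≠ 0) p hp.ne_one
  have he : e ≠ 0 := by
    rintro rfl
    exact hpm (by simpa using hpn)
  have hm₀ : m ≠ 0 := by
    rintro rfl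
    exact hpm (dvd_zero p)
  have hm₁ : m ≠ 1 := by
    rintro rfl
    exact hpow ⟨p, e, hp, Nat.one_le_iff_ne_zero.2 he, mul_one _⟩
  have hm₂ : m ≠ 2 := by
    rintro rfl
    exact htwo ⟨p, e, hp, hodd, Nat.one_le_iff_ne_zero.2 he, mul_comm _ _⟩
  have hp₂ : 2 < p := hp.two_le.lt_of_ne (by rintro rfl; exact absurd hodd (by decide))
  exact ⟨p ^ e, m, hp₂.trans_le (Nat.le_self_pow he p), by lia,
    ((hp.coprime_iff_not_dvd).2 hpm).pow_left e, rfl⟩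

theorem hasCrossCommutingNonabelianSquare_zmod_mul {u v : ℕ} (hu : 2 < u) (hv : 2 < v)
    (huv : u.Coprime v) : HasCrossCommutingNonabelianSquare (ZMod (u * v)) :=
  have := nontrivial_units_zmod hu
  have := nontrivial_units_zmod hv
  hasCrossCommutingNonabelianSquare_prod.of_ringEquiv (ZMod.chineseRemainder huv).symm

theorem not_hasCrossCommutingNonabelianSquare_zmod_prime_pow {p : ℕ} (hp : p.Prime) (e : ℕ) :
    ¬ HasCrossCommutingNonabelianSquare (ZMod (p ^ e)) :=
  have := preValuationRing_zmod_prime_pow hp e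
  not_hasCrossCommutingNonabelianSquare_of_preValuationRing

theorem not_hasCrossCommutingNonabelianSquare_zmod_two_mul_prime_pow {q : ℕ} (hq : q.Prime)
    (hodd : Odd q) (e : ℕ) : ¬ HasCrossCommutingNonabelianSquare (ZMod (2 * q ^ e)) := fun h ↦
  have := preValuationRing_zmod_prime_pow hq e
  have hcop : Nat.Coprime 2 (q ^ e) := (Nat.coprime_two_left.2 hodd).pow_right e
  not_hasCrossCommutingNonabelianSquare_prod_of_subsingleton_units
    (h.of_ringEquiv (ZMod.chineseRemainder hcop))

end ZMod

/-- **Exact classification for residue rings (prime power / twice odd prime power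
version).** For `n ≥ 2`, the affine group of `ℤ/nℤ` contains a cross-commuting
nonabelian square if and only if `n` is neither a prime power nor twice an odd prime
power. -/
theorem zmod_classification (n : ℕ) (hn : 2 ≤ n) :
    HasCrossCommutingNonabelianSquare (ZMod n) ↔
      (¬ ∃ p e : ℕ, p.Prime ∧ 1 ≤ e ∧ n = p ^ e) ∧
      (¬ ∃ q e : ℕ, q.Prime ∧ Odd q ∧ 1 ≤ e ∧ n = 2 * q ^ e) := by
  constructor
  · refine fun h ↦ ⟨?_, ?_⟩
    · rintro ⟨p, e, hp, -, rfl⟩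
      exact not_hasCrossCommutingNonabelianSquare_zmod_prime_pow hp e h
    · rintro ⟨q, e, hq, hodd, -, rfl⟩
      exact not_hasCrossCommutingNonabelianSquare_zmod_two_mul_prime_pow hq hodd e h
  · rintro ⟨hpow, htwo⟩
    obtain ⟨u, v, hu, hv, huv, rfl⟩ :=
      exists_coprime_mul_of_not_prime_pow_of_not_two_mul_prime_pow hn hpow htwo
    exact hasCrossCommutingNonabelianSquare_zmod_mul hu hv huv
end
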